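/- arXiv:1912.04815 — 3 statements merged into one kernel-verified Lean document; each statement's English description precedes it below -/
import Mathlib

section
/- Let n ≥ 1, let P be an n×n nonnegative row sub-stochastic matrix, let w ∈ ℝ^n with w ≥ 0, and let c ∈ ℝ^n. Define the sequence x(0) = w and x(t+1) = S_0^w(Pᵀx(t) + c) for t ≥ 0. Then the sequence x(t) is entrywise nonincreasing and converges, as t → ∞, to the maximal equilibrium x̄ of the network (P, w) with exogenous flow c (i.e., its limit x̄ satisfies x̄ = S_0^w(Pᵀx̄ + c) and x ≤ x̄ for every x with x = S_0^w(Pᵀx + c)). -/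
open Matrix Finset Filter Topology

/-- The saturation function `S_0^w`. -/
def sat {n : ℕ} (w y : Fin n → ℝ) : Fin n → ℝ := fun i => min (max (y i) 0) (w i)

/-- `x` is an equilibrium of the network `(P, w)` with exogenous flow `c`. -/
def IsEquil {n : ℕ} (P : Matrix (Fin n) (Fin n) ℝ) (w c x : Fin n → ℝ) : Prop :=
  x = sat w (Pᵀ.mulVec x + c)

/-!
The update map `y ↦ S_0^w(Pᵀy + c)` is monotone because `P ≥ 0`, it is continuous, and its values
lie between `min(0, w)` and `w`. Hence its iterates from `w` decrease and are bounded below, so they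
converge, and by continuity their limit is a fixed point. Every fixed point `y` satisfies `y ≤ w`;
applying the monotone map repeatedly to this inequality leaves `y` unchanged and turns `w` into the
iterates, so `y` lies below their limit.
-/

theorem eq_iterate_of_forall_succ {α : Type*} {f : α → α} {a : α} {x : ℕ → α} (hx0 : x 0 = a)
    (hx : ∀ t, x (t + 1) = f (x t)) : x = fun t => f^[t] a := by
  funext t
  induction t with
  | zero => exact hx0
  | succ t ih => rw [hx, ih, Function.iterate_succ_apply']

theorem isGreatest_isFixedPt_le_of_tendsto_iterate {α : Type*} [TopologicalSpace α]
    [PartialOrder α] [OrderClosedTopology α] {f : α → α} {a z : α} (hf : Monotone f)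
    (ha : f a ≤ a) (hz : Tendsto (fun t => f^[t] a) atTop (𝓝 z)) (hcont : ContinuousAt f z) :
    IsGreatest {y | Function.IsFixedPt f y ∧ y ≤ a} z := by
  refine ⟨⟨isFixedPt_of_tendsto_iterate hz hcont, ?_⟩, ?_⟩
  · exact le_of_tendsto' hz fun t => hf.antitone_iterate_of_map_le ha t.zero_le
  · rintro y ⟨hy, hya⟩
    exact ge_of_tendsto' hz fun t => (hy.iterate t).symm.trans_le (hf.iterate t hya)

theorem monotone_mulVec_of_nonneg {m k R : Type*} [Fintype k] [Semiring R] [PartialOrder R]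
    [IsOrderedRing R] {A : Matrix m k R} (hA : ∀ i j, 0 ≤ A i j) : Monotone A.mulVec :=
  fun _ _ h i => dotProduct_le_dotProduct_of_nonneg_left h (hA i)

section Saturation

variable {n : ℕ} (w : Fin n → ℝ)

theorem monotone_sat : Monotone (sat w) :=
  fun _ _ h i => min_le_min_right _ (max_le_max_right _ (h i))

theorem sat_le (y : Fin n → ℝ) : sat w y ≤ w :=
  fun _ => min_le_right _ _

theorem zero_inf_le_sat (y : Fin n → ℝ) : 0 ⊓ w ≤ sat w y :=
  fun _ => min_le_min_right _ (le_max_right _ _)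

theorem continuous_sat : Continuous (sat w) := by
  unfold sat
  fun_prop

end Saturation

/-- The update map of the network `(P, w)` with exogenous flow `c`, whose fixed points are the
equilibria. -/
def networkMap {n : ℕ} (P : Matrix (Fin n) (Fin n) ℝ) (w c y : Fin n → ℝ) : Fin n → ℝ :=
  sat w (Pᵀ.mulVec y + c)

section NetworkMap

variable {n : ℕ} {P : Matrix (Fin n) (Fin n) ℝ} {w c : Fin n → ℝ}

theorem isFixedPt_networkMap_iff {y : Fin n → ℝ} :
    Function.IsFixedPt (networkMap P w c) y ↔ IsEquil P w c y :=
  eq_comm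

theorem IsEquil.le {y : Fin n → ℝ} (hy : IsEquil P w c y) : y ≤ w :=
  hy.trans_le (sat_le w _)

theorem monotone_networkMap (hP : ∀ i j, 0 ≤ P i j) : Monotone (networkMap P w c) :=
  (monotone_sat w).comp ((monotone_mulVec_of_nonneg fun i j => hP j i).add_const c)

theorem continuous_networkMap : Continuous (networkMap P w c) :=
  (continuous_sat w).comp ((continuous_const.matrix_mulVec continuous_id).add continuous_const)

theorem bddBelow_range_iterate_networkMap :
    BddBelow (Set.range fun t => (networkMap P w c)^[t] w) := by
  refine ⟨0 ⊓ w, Set.forall_mem_range.2 fun t => ?_⟩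
  cases t with
  | zero => exact inf_le_right
  | succ t =>
    rw [Function.iterate_succ_apply']
    exact zero_inf_le_sat w _

end NetworkMap

theorem iteration_from_w_converges_to_maximal_general
    {n : ℕ} (P : Matrix (Fin n) (Fin n) ℝ) (hP : ∀ i j, 0 ≤ P i j) (w c : Fin n → ℝ)
    (x : ℕ → Fin n → ℝ) (hx0 : x 0 = w)
    (hxs : ∀ t, x (t + 1) = sat w (Pᵀ.mulVec (x t) + c)) :
    Antitone x ∧
    ∃ xhi : Fin n → ℝ, Tendsto x atTop (𝓝 xhi) ∧ IsEquil P w c xhi ∧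
      ∀ y, IsEquil P w c y → y ≤ xhi := by
  have hx : x = fun t => (networkMap P w c)^[t] w := eq_iterate_of_forall_succ hx0 hxs
  have hmono : Monotone (networkMap P w c) := monotone_networkMap hP
  have hw : networkMap P w c w ≤ w := sat_le w _
  have hanti : Antitone x := hx ▸ hmono.antitone_iterate_of_map_le hw
  have hbdd : BddBelow (Set.range x) := hx ▸ bddBelow_range_iterate_networkMap
  have hlim : Tendsto x atTop (𝓝 (⨅ t, x t)) := tendsto_atTop_ciInf hanti hbdd
  have hgreatest : IsGreatest {y | Function.IsFixedPt (networkMap P w c) y ∧ y ≤ w} (⨅ t, x t) :=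
    isGreatest_isFixedPt_le_of_tendsto_iterate hmono hw (hx ▸ hlim)
      continuous_networkMap.continuousAt
  exact ⟨hanti, _, hlim, isFixedPt_networkMap_iff.1 hgreatest.1.1,
    fun y hy => hgreatest.2 ⟨isFixedPt_networkMap_iff.2 hy, hy.le⟩⟩

/-- the iteration started at `w` is entrywise nonincreasing and converges to
the maximal equilibrium. -/
theorem iteration_from_w_converges_to_maximal
    {n : ℕ} (hn : 1 ≤ n) (P : Matrix (Fin n) (Fin n) ℝ)
    (hP : ∀ i j, 0 ≤ P i j) (hsub : ∀ i, ∑ j, P i j ≤ 1)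
    (w : Fin n → ℝ) (hw : 0 ≤ w) (c : Fin n → ℝ)
    (x : ℕ → Fin n → ℝ) (hx0 : x 0 = w)
    (hxs : ∀ t, x (t + 1) = sat w (Pᵀ.mulVec (x t) + c)) :
    Antitone x ∧
    ∃ xhi : Fin n → ℝ, Tendsto x atTop (𝓝 xhi) ∧ IsEquil P w c xhi ∧
      ∀ y, IsEquil P w c y → y ≤ xhi :=
  iteration_from_w_converges_to_maximal_general P hP w c x hx0 hxs
end

section
/- Let n ≥ 1, let P be an n×n nonnegative row sub-stochastic matrix, let w ∈ ℝ^n with w ≥ 0, and let c ∈ ℝ^n. Then there is a partition {1,…,n} = V_+ ∪ V_0 ∪ V_- (depending only on P, w, c) such that: (i) every equilibrium x of (P, w) with exogenous flow c satisfies x_i = 0 for all i ∈ V_-, x_i = w_i for all i ∈ V_+, and x_i = c_i + (Pᵀx)_i for all i ∈ V_0; and (ii) any two equilibria x, y satisfy x_i = y_i for all i ∈ V_- ∪ V_+. -/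
open Matrix Finset Filter Topology

/-!
If `x` and `y` are equilibria, then `x - y` is in absolute value no larger, entry by entry, than
`Pᵀ (x - y)`, because clamping does not increase distances; and `Pᵀ (x - y)` is no larger than
`x - y` in the `ℓ¹` norm, because the rows of `P` have absolute sum at most one. So `x - y` and
`Pᵀ (x - y)` have the same absolute value at every node. A point moved by the clamping gets
strictly closer to every other point it is not clamped together with, so a node that is saturated
in one equilibrium takes the same value in all of them.
-/

section Clamp

theorem clamp_eq_clamp_or_between {α : Type*} [LinearOrder α] {l u a : α}
    (ha : a ≠ min (max a l) u) (b : α) :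
    min (max a l) u = min (max b l) u ∨
      (a < min (max a l) u ∧ min (max a l) u ≤ min (max b l) u ∧ min (max b l) u ≤ b) ∨
      (b ≤ min (max b l) u ∧ min (max b l) u ≤ min (max a l) u ∧ min (max a l) u < a) := by
  grind

variable {α : Type*} [AddCommGroup α]

theorem abs_clamp_sub_clamp_le [Lattice α] [AddLeftMono α] (l u a b : α) :
    |(a ⊔ l) ⊓ u - (b ⊔ l) ⊓ u| ≤ |a - b| :=
  (abs_inf_sub_inf_le_abs _ _ _).trans (abs_sup_sub_sup_le_abs _ _ _)

theorem eq_of_abs_sub_le_abs_clamp_sub_clamp [LinearOrder α] [IsOrderedAddMonoid α] {l u a b : α}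
    (h : |a - b| ≤ |min (max a l) u - min (max b l) u|) (ha : a ≠ min (max a l) u) : a = b := by
  obtain heq | ⟨haa, hab, hbb⟩ | ⟨hbb, hab, haa⟩ := clamp_eq_clamp_or_between ha b
  · rwa [heq, sub_self, abs_zero, abs_nonpos_iff, sub_eq_zero] at h
  · rw [abs_sub_comm a, abs_sub_comm (min (max a l) u), abs_of_nonneg (sub_nonneg.2 hab)] at h
    have hlt : min (max b l) u - min (max a l) u < b - a :=
      (sub_le_sub_right hbb _).trans_lt (sub_lt_sub_left haa _)
    exact absurd ((le_abs_self _).trans h) hlt.not_ge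
  · rw [abs_of_nonneg (sub_nonneg.2 hab)] at h
    have hlt : min (max a l) u - min (max b l) u < a - b :=
      (sub_le_sub_left hbb _).trans_lt (sub_lt_sub_right haa _)
    exact absurd ((le_abs_self _).trans h) hlt.not_ge

end Clamp

theorem sum_abs_mulVec_le {m n R : Type*} [Fintype m] [Fintype n] [Ring R] [LinearOrder R]
    [IsOrderedRing R] {A : Matrix m n R} {C : R} (hA : ∀ j, ∑ i, |A i j| ≤ C) (v : n → R) :
    ∑ i, |(A *ᵥ v) i| ≤ C * ∑ j, |v j| :=
  calc
    ∑ i, |(A *ᵥ v) i| ≤ ∑ i, ∑ j, |A i j * v j| := by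
      gcongr with i
      exact abs_sum_le_sum_abs _ _
    _ = ∑ j, (∑ i, |A i j|) * |v j| := by
      rw [sum_comm]
      simp only [abs_mul, sum_mul]
    _ ≤ ∑ j, C * |v j| := by gcongr with j; exact hA j
    _ = C * ∑ j, |v j| := (mul_sum _ _ _).symm

section Equilibria

variable {n : ℕ} {P : Matrix (Fin n) (Fin n) ℝ} {w c x y : Fin n → ℝ} {i : Fin n}

namespace IsEquil

theorem apply_eq_clamp (hx : IsEquil P w c x) (i : Fin n) :
    x i = min (max ((Pᵀ *ᵥ x) i + c i) 0) (w i) :=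
  congrFun hx i

theorem abs_sub_le_abs_mulVec_sub (hx : IsEquil P w c x) (hy : IsEquil P w c y) (i : Fin n) :
    |x i - y i| ≤ |(Pᵀ *ᵥ x) i - (Pᵀ *ᵥ y) i| := by
  simpa only [← hx.apply_eq_clamp, ← hy.apply_eq_clamp, add_sub_add_right_eq_sub] using
    abs_clamp_sub_clamp_le 0 (w i) ((Pᵀ *ᵥ x) i + c i) ((Pᵀ *ᵥ y) i + c i)

theorem abs_sub_eq_abs_mulVec_sub (hP : ∀ i, ∑ j, |P i j| ≤ 1) (hx : IsEquil P w c x)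
    (hy : IsEquil P w c y) (i : Fin n) :
    |x i - y i| = |(Pᵀ *ᵥ x) i - (Pᵀ *ᵥ y) i| := by
  have hle : ∀ j ∈ univ, |x j - y j| ≤ |(Pᵀ *ᵥ x) j - (Pᵀ *ᵥ y) j| :=
    fun j _ ↦ hx.abs_sub_le_abs_mulVec_sub hy j
  have hsum : ∑ j, |(Pᵀ *ᵥ x) j - (Pᵀ *ᵥ y) j| ≤ ∑ j, |x j - y j| := by
    simpa only [mulVec_sub, Pi.sub_apply, one_mul] using
      sum_abs_mulVec_le (A := Pᵀ) hP (x - y)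
  exact (sum_eq_sum_iff_of_le hle).1 ((sum_le_sum hle).antisymm hsum) i (mem_univ i)

theorem apply_eq_of_ne_inflow (hP : ∀ i, ∑ j, |P i j| ≤ 1) (hx : IsEquil P w c x)
    (hy : IsEquil P w c y) (hi : x i ≠ c i + (Pᵀ *ᵥ x) i) : x i = y i := by
  have hinflow : (Pᵀ *ᵥ x) i + c i = (Pᵀ *ᵥ y) i + c i := by
    refine eq_of_abs_sub_le_abs_clamp_sub_clamp (l := 0) (u := w i) ?_ ?_
    · rw [← hx.apply_eq_clamp, ← hy.apply_eq_clamp, add_sub_add_right_eq_sub,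
        hx.abs_sub_eq_abs_mulVec_sub hP hy]
    · rwa [← hx.apply_eq_clamp, add_comm, ne_comm]
  rw [hx.apply_eq_clamp, hy.apply_eq_clamp, hinflow]

theorem apply_eq_zero_or_eq_of_ne_inflow (hx : IsEquil P w c x) (hi : x i ≠ c i + (Pᵀ *ᵥ x) i) :
    x i = 0 ∨ x i = w i := by
  have hclamp := hx.apply_eq_clamp i
  grind

end IsEquil

/-- The part `V₀` of the partition: the nodes at which no equilibrium is altered by the
saturation. -/
def unsaturatedNodes (P : Matrix (Fin n) (Fin n) ℝ) (w c : Fin n → ℝ) : Set (Fin n) :=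
  {i | ∀ x, IsEquil P w c x → x i = c i + (Pᵀ *ᵥ x) i}

theorem notMem_unsaturatedNodes :
    i ∉ unsaturatedNodes P w c ↔ ∃ z, IsEquil P w c z ∧ z i ≠ c i + (Pᵀ *ᵥ z) i := by
  simp [unsaturatedNodes]

/-- The part `V₋` of the partition: the nodes outside `V₀` at which every equilibrium vanishes.
A node outside `V₀` with `w i = 0` is put here rather than into `V₊`. -/
def emptyNodes (P : Matrix (Fin n) (Fin n) ℝ) (w c : Fin n → ℝ) : Set (Fin n) :=
  {i | ∀ x, IsEquil P w c x → x i = 0} \ unsaturatedNodes P w c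

/-- The part `V₊` of the partition, on which every equilibrium equals `w`; encoded as the nodes
left over by `V₀` and `V₋`. -/
def fullNodes (P : Matrix (Fin n) (Fin n) ℝ) (w c : Fin n → ℝ) : Set (Fin n) :=
  (unsaturatedNodes P w c ∪ emptyNodes P w c)ᶜ

namespace IsEquil

theorem apply_eq_of_notMem_unsaturatedNodes (hP : ∀ i, ∑ j, |P i j| ≤ 1) (hx : IsEquil P w c x)
    (hy : IsEquil P w c y) (hi : i ∉ unsaturatedNodes P w c) : x i = y i := by
  obtain ⟨z, hz, hzi⟩ := notMem_unsaturatedNodes.1 hi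
  exact (hz.apply_eq_of_ne_inflow hP hx hzi).symm.trans (hz.apply_eq_of_ne_inflow hP hy hzi)

theorem apply_eq_zero_or_eq_of_notMem_unsaturatedNodes (hP : ∀ i, ∑ j, |P i j| ≤ 1)
    (hx : IsEquil P w c x) (hi : i ∉ unsaturatedNodes P w c) : x i = 0 ∨ x i = w i := by
  obtain ⟨z, hz, hzi⟩ := notMem_unsaturatedNodes.1 hi
  rw [← hz.apply_eq_of_ne_inflow hP hx hzi]
  exact hz.apply_eq_zero_or_eq_of_ne_inflow hzi

theorem apply_eq_of_mem_fullNodes (hP : ∀ i, ∑ j, |P i j| ≤ 1) (hx : IsEquil P w c x)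
    (hi : i ∈ fullNodes P w c) : x i = w i := by
  obtain ⟨hi₀, hi'⟩ : i ∉ unsaturatedNodes P w c ∧ i ∉ emptyNodes P w c := not_or.1 hi
  have hne : x i ≠ 0 := fun hxi ↦
    hi' ⟨fun y hy ↦ (hy.apply_eq_of_notMem_unsaturatedNodes hP hx hi₀).trans hxi, hi₀⟩
  exact (hx.apply_eq_zero_or_eq_of_notMem_unsaturatedNodes hP hi₀).resolve_left hne

end IsEquil

end Equilibria

theorem fundamental_partition_general {n : ℕ} (P : Matrix (Fin n) (Fin n) ℝ)
    (hP : ∀ i, ∑ j, |P i j| ≤ 1) (w c : Fin n → ℝ) :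
    ∃ Vp V0 Vm : Set (Fin n),
      Vp ∪ V0 ∪ Vm = Set.univ ∧
      Disjoint Vp V0 ∧ Disjoint Vp Vm ∧ Disjoint V0 Vm ∧
      (∀ x, IsEquil P w c x →
        (∀ i ∈ Vm, x i = 0) ∧ (∀ i ∈ Vp, x i = w i) ∧
        (∀ i ∈ V0, x i = c i + Pᵀ.mulVec x i)) ∧
      (∀ x y, IsEquil P w c x → IsEquil P w c y → ∀ i ∈ Vm ∪ Vp, x i = y i) := by
  have hcover : fullNodes P w c ∪ unsaturatedNodes P w c ∪ emptyNodes P w c = Set.univ := by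
    rw [Set.union_assoc, fullNodes, Set.compl_union_self]
  have hsaturated : ∀ i ∈ emptyNodes P w c ∪ fullNodes P w c, i ∉ unsaturatedNodes P w c :=
    fun i hi hi₀ ↦ hi.elim (fun hempty ↦ hempty.2 hi₀) fun hfull ↦ hfull (Or.inl hi₀)
  refine ⟨fullNodes P w c, unsaturatedNodes P w c, emptyNodes P w c, hcover,
    disjoint_compl_left.mono_right Set.subset_union_left,
    disjoint_compl_left.mono_right Set.subset_union_right, Set.disjoint_sdiff_right, ?_, ?_⟩
  · exact fun x hx ↦ ⟨fun i hi ↦ hi.1 x hx, fun i hi ↦ hx.apply_eq_of_mem_fullNodes hP hi,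
      fun i hi ↦ hi x hx⟩
  · exact fun x y hx hy i hi ↦ hx.apply_eq_of_notMem_unsaturatedNodes hP hy (hsaturated i hi)

/-- there is a partition `V₊ ∪ V₀ ∪ V₋` of the node set, depending only on
`(P, w, c)`, such that every equilibrium is `0` on `V₋`, equals `w` on `V₊`, and solves
the unsaturated linear equation on `V₀`; moreover any two equilibria agree on `V₋ ∪ V₊`. -/
theorem fundamental_partition
    {n : ℕ} (hn : 1 ≤ n) (P : Matrix (Fin n) (Fin n) ℝ)
    (hP : ∀ i j, 0 ≤ P i j) (hsub : ∀ i, ∑ j, P i j ≤ 1)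
    (w : Fin n → ℝ) (hw : 0 ≤ w) (c : Fin n → ℝ) :
    ∃ Vp V0 Vm : Set (Fin n),
      Vp ∪ V0 ∪ Vm = Set.univ ∧
      Disjoint Vp V0 ∧ Disjoint Vp Vm ∧ Disjoint V0 Vm ∧
      (∀ x, IsEquil P w c x →
        (∀ i ∈ Vm, x i = 0) ∧ (∀ i ∈ Vp, x i = w i) ∧
        (∀ i ∈ V0, x i = c i + Pᵀ.mulVec x i)) ∧
      (∀ x y, IsEquil P w c x → IsEquil P w c y → ∀ i ∈ Vm ∪ Vp, x i = y i) :=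
  fundamental_partition_general P (by simpa only [abs_of_nonneg (hP _ _)] using hsub) w c
end

section
/- Let n ≥ 1, let P be an n×n irreducible row-stochastic matrix, let w ∈ ℝ^n with w ≥ 0, and let c ∈ ℝ^n with Σ_i c_i = 0. Let π ∈ ℝ^n be the invariant probability vector of P (π = Pᵀπ, Σ_i π_i = 1, π_i > 0 for all i), and suppose ν ∈ ℝ^n satisfies ν = Pᵀν + c. If min_i (ν_i / π_i) + min_i ((w_i − ν_i) / π_i) > 0, then the set of equilibria of the network (P, w) with exogenous flow c equals the segment { ν + α π : −min_i (ν_i / π_i) ≤ α ≤ min_i ((w_i − ν_i) / π_i) }, and in particular there are multiple (infinitely many) equilibria. -/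
open Matrix Finset Filter Topology

/-- Reachability in the graph `G_P`. -/
def Reaches {n : ℕ} (P : Matrix (Fin n) (Fin n) ℝ) : Fin n → Fin n → Prop :=
  Relation.ReflTransGen (fun a b => 0 < P a b)

/-!
Fix an invariant `u` of the flow `x ↦ Pᵀ x + c` in the interior of the box `[0, w]`; the positivity
hypothesis makes the midpoint of the segment such a point. Saturation does not increase any
coordinate of the distance to `u`, so for an equilibrium `x` the vector `z = |x - u|` satisfies
`z ≤ Pᵀ z`. Comparing `z` with the smallest multiple of `π` above it, irreducibility forces `z` to
be that multiple, hence `Pᵀ z = z`. No coordinate was therefore moved by the saturation, since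
moving it would bring it strictly closer to `u`, and `x` is itself a fixed point of the flow. The
fixed points of the flow form the line `ν + ℝ π`, which meets the box in the segment.
-/

theorem abs_mulVec_le {m ι R : Type*} [Fintype ι] [Ring R] [LinearOrder R] [IsOrderedRing R]
    {A : Matrix m ι R} (hA : ∀ i j, 0 ≤ A i j) (z : ι → R) : |A *ᵥ z| ≤ A *ᵥ |z| := fun i =>
  calc |∑ j, A i j * z j| ≤ ∑ j, |A i j * z j| := Finset.abs_sum_le_sum_abs _ _
    _ = ∑ j, A i j * |z j| := by simp only [abs_mul, abs_of_nonneg (hA i _)]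

section InvariantVectors

variable {ι R : Type*} [Fintype ι]

theorem eq_zero_of_transpose_mulVec_le [Semiring R] [LinearOrder R] [IsStrictOrderedRing R]
    {P : Matrix ι ι R} (hP : ∀ i j, 0 ≤ P i j)
    (hirr : ∀ i j, Relation.ReflTransGen (fun a b => 0 < P a b) i j)
    {v : ι → R} (hv : 0 ≤ v) (hPv : Pᵀ *ᵥ v ≤ v) {k : ι} (hk : v k = 0) : v = 0 := by
  funext j
  induction hirr j k using Relation.ReflTransGen.head_induction_on with
  | refl => exact hk
  | @head a b hab _ hb =>
    have hterm : P a b * v a ≤ (Pᵀ *ᵥ v) b :=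
      Finset.single_le_sum (f := fun i => P i b * v i) (fun i _ => mul_nonneg (hP i b) (hv i))
        (Finset.mem_univ a)
    have hnonpos : P a b * v a ≤ 0 := (hterm.trans (hPv b)).trans_eq hb
    exact le_antisymm (nonpos_of_mul_nonpos_right hnonpos hab) (hv a)

variable [Field R] [LinearOrder R] [IsStrictOrderedRing R] {P : Matrix ι ι R} {π : ι → R}

theorem exists_eq_smul_of_le_transpose_mulVec [Nonempty ι] (hP : ∀ i j, 0 ≤ P i j)
    (hirr : ∀ i j, Relation.ReflTransGen (fun a b => 0 < P a b) i j)
    (hπ : Pᵀ *ᵥ π = π) (hπpos : ∀ i, 0 < π i) {z : ι → R} (hz : z ≤ Pᵀ *ᵥ z) :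
    ∃ a : R, z = a • π := by
  obtain ⟨k, hk⟩ := Finite.exists_max fun i => z i / π i
  refine ⟨z k / π k, (sub_eq_zero.1 ?_).symm⟩
  refine eq_zero_of_transpose_mulVec_le hP hirr (k := k) (sub_nonneg.2 fun i => ?_) ?_ ?_
  · exact (div_le_iff₀ (hπpos i)).1 (hk i)
  · rw [mulVec_sub, mulVec_smul, hπ]
    exact sub_le_sub_left hz _
  · simp [(hπpos k).ne']

theorem transpose_mulVec_add_eq_self_iff [Nonempty ι] (hP : ∀ i j, 0 ≤ P i j)
    (hirr : ∀ i j, Relation.ReflTransGen (fun a b => 0 < P a b) i j)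
    (hπ : Pᵀ *ᵥ π = π) (hπpos : ∀ i, 0 < π i) {c ν : ι → R} (hν : Pᵀ *ᵥ ν + c = ν)
    {x : ι → R} : Pᵀ *ᵥ x + c = x ↔ ∃ α : R, x = ν + α • π := by
  constructor
  · intro hx
    have hdiff : Pᵀ *ᵥ (x - ν) = x - ν := by
      rw [mulVec_sub, ← add_sub_add_right_eq_sub _ _ c, hx, hν]
    obtain ⟨α, hα⟩ := exists_eq_smul_of_le_transpose_mulVec hP hirr hπ hπpos hdiff.ge
    exact ⟨α, eq_add_of_sub_eq' hα⟩
  · rintro ⟨α, rfl⟩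
    rw [mulVec_add, mulVec_smul, hπ, add_right_comm, hν]

end InvariantVectors

section Clamp

variable {R : Type*} [AddCommGroup R] [LinearOrder R] [IsOrderedAddMonoid R]

theorem abs_clamp_sub_lt {a b u y : R} (hu : u ∈ Set.Ioo a b) (hy : min (max y a) b ≠ y) :
    |min (max y a) b - u| < |y - u| := by
  obtain ⟨hau, hub⟩ := hu
  rcases lt_or_ge y a with hya | hay
  · rw [max_eq_right hya.le, min_eq_left (hau.trans hub).le, abs_sub_comm a, abs_sub_comm y,
      abs_of_pos (sub_pos.2 hau), abs_of_pos (sub_pos.2 (hya.trans hau))]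
    exact sub_lt_sub_left hya u
  · rw [max_eq_left hay] at hy ⊢
    have hby : b < y := not_le.1 fun hyb => hy (min_eq_left hyb)
    rw [min_eq_right hby.le, abs_of_pos (sub_pos.2 hub), abs_of_pos (sub_pos.2 (hub.trans hby))]
    exact sub_lt_sub_right hby u

theorem abs_clamp_sub_le {a b u : R} (hu : u ∈ Set.Ioo a b) (y : R) :
    |min (max y a) b - u| ≤ |y - u| := by
  by_cases hy : min (max y a) b = y
  · rw [hy]
  · exact (abs_clamp_sub_lt hu hy).le

end Clamp

section Box

variable {ι : Type*} [Finite ι] [Nonempty ι] {π : ι → ℝ}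

theorem le_iInf_div_iff (hπ : ∀ i, 0 < π i) {v : ι → ℝ} {a : ℝ} :
    a ≤ ⨅ i, v i / π i ↔ ∀ i, a * π i ≤ v i := by
  simp only [le_ciInf_iff (Set.finite_range _).bddBelow, le_div_iff₀ (hπ _)]

theorem add_smul_mem_Icc_iff (hπ : ∀ i, 0 < π i) {ν w : ι → ℝ} {α : ℝ} :
    ν + α • π ∈ Set.Icc 0 w ↔
      -(⨅ i, ν i / π i) ≤ α ∧ α ≤ ⨅ i, (w i - ν i) / π i := by
  rw [neg_le, le_iInf_div_iff hπ, le_iInf_div_iff hπ]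
  simp only [Set.mem_Icc, Pi.le_def, Pi.zero_apply, Pi.add_apply, Pi.smul_apply, smul_eq_mul,
    neg_mul, neg_le_iff_add_nonneg, le_sub_iff_add_le']

theorem exists_add_smul_mem_Ioo (hπ : ∀ i, 0 < π i) {ν w : ι → ℝ}
    (hpos : 0 < (⨅ i, ν i / π i) + ⨅ i, (w i - ν i) / π i) :
    ∃ α : ℝ, ∀ i, (ν + α • π) i ∈ Set.Ioo 0 (w i) := by
  set a := ⨅ i, ν i / π i with ha
  set b := ⨅ i, (w i - ν i) / π i with hb
  refine ⟨(b - a) / 2, fun i => ?_⟩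
  have hlower : a * π i ≤ ν i := (le_iInf_div_iff hπ).1 ha.le i
  have hupper : b * π i ≤ w i - ν i := (le_iInf_div_iff hπ).1 hb.le i
  have hlength : 0 < (a + b) * π i := mul_pos hpos (hπ i)
  simp only [Pi.add_apply, Pi.smul_apply, smul_eq_mul, Set.mem_Ioo]
  constructor <;> linarith

end Box

theorem infinite_image_Icc_add_smul {R E : Type*} [Field R] [LinearOrder R]
    [IsStrictOrderedRing R] [AddCommGroup E] [Module R E] {p v : E} (hv : v ≠ 0) {a b : R}
    (hab : a < b) : ((fun t : R => p + t • v) '' Set.Icc a b).Infinite :=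
  (Set.Icc_infinite hab).image
    ((add_right_injective p).comp (smul_left_injective R hv)).injOn

section Equilibria

variable {n : ℕ} {P : Matrix (Fin n) (Fin n) ℝ} {w c x : Fin n → ℝ}

theorem sat_mem_Icc (hw : 0 ≤ w) (y : Fin n → ℝ) : sat w y ∈ Set.Icc 0 w :=
  ⟨fun i => le_min (le_max_right _ _) (hw i), fun _ => min_le_right _ _⟩

theorem sat_eq_self {y : Fin n → ℝ} (hy : y ∈ Set.Icc 0 w) : sat w y = y :=
  funext fun i => (congrArg (min · (w i)) (max_eq_left (hy.1 i))).trans (min_eq_left (hy.2 i))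

theorem IsEquil.transpose_mulVec_add_eq_self [Nonempty (Fin n)] (hP : ∀ i j, 0 ≤ P i j)
    (hirr : ∀ i j, Reaches P i j) {π u : Fin n → ℝ} (hπ : Pᵀ *ᵥ π = π) (hπpos : ∀ i, 0 < π i)
    (hu : Pᵀ *ᵥ u + c = u) (huw : ∀ i, u i ∈ Set.Ioo 0 (w i)) (hx : IsEquil P w c x) :
    Pᵀ *ᵥ x + c = x := by
  set y := Pᵀ *ᵥ x + c
  have hyu : y - u = Pᵀ *ᵥ (x - u) := by
    rw [mulVec_sub, ← add_sub_add_right_eq_sub (Pᵀ *ᵥ x) _ c, hu]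
  have hflow : |y - u| ≤ Pᵀ *ᵥ |x - u| := hyu ▸ abs_mulVec_le (fun i j => hP j i) (x - u)
  have hsat : |x - u| ≤ |y - u| := fun i => by
    rw [hx]
    exact abs_clamp_sub_le (huw i) (y i)
  obtain ⟨a, ha⟩ := exists_eq_smul_of_le_transpose_mulVec hP hirr hπ hπpos (hsat.trans hflow)
  have hinv : Pᵀ *ᵥ |x - u| = |x - u| := by rw [ha, mulVec_smul, hπ]
  funext i
  by_contra hne
  have hxi : x i = min (max (y i) 0) (w i) := congrFun hx i
  have hcloser : |x i - u i| < |y i - u i| :=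
    hxi ▸ abs_clamp_sub_lt (huw i) (hxi ▸ Ne.symm hne)
  exact hcloser.not_ge ((hflow.trans_eq hinv) i)

theorem isEquil_iff_transpose_mulVec_add_eq_self_and_mem_Icc [Nonempty (Fin n)]
    (hP : ∀ i j, 0 ≤ P i j) (hirr : ∀ i j, Reaches P i j) {π u : Fin n → ℝ}
    (hπ : Pᵀ *ᵥ π = π) (hπpos : ∀ i, 0 < π i) (hu : Pᵀ *ᵥ u + c = u)
    (huw : ∀ i, u i ∈ Set.Ioo 0 (w i)) :
    IsEquil P w c x ↔ Pᵀ *ᵥ x + c = x ∧ x ∈ Set.Icc 0 w := by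
  constructor
  · intro hx
    have hw : 0 ≤ w := fun i => ((huw i).1.trans (huw i).2).le
    exact ⟨hx.transpose_mulVec_add_eq_self hP hirr hπ hπpos hu huw, hx ▸ sat_mem_Icc hw _⟩
  · rintro ⟨hfix, hbox⟩
    rw [IsEquil, hfix, sat_eq_self hbox]

end Equilibria

theorem irreducible_nonuniqueness_sufficient_segment_general
    {n : ℕ} (hn : 1 ≤ n) (P : Matrix (Fin n) (Fin n) ℝ)
    (hP : ∀ i j, 0 ≤ P i j) (hirr : ∀ i j, Reaches P i j) (w c : Fin n → ℝ)
    (π : Fin n → ℝ) (hπ1 : Pᵀ.mulVec π = π) (hπ3 : ∀ i, 0 < π i)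
    (ν : Fin n → ℝ) (hν : ν = Pᵀ.mulVec ν + c)
    (hpos : 0 < (⨅ i, ν i / π i) + ⨅ i, (w i - ν i) / π i) :
    {x : Fin n → ℝ | IsEquil P w c x} =
      {x : Fin n → ℝ | ∃ α : ℝ, -(⨅ i, ν i / π i) ≤ α ∧
        α ≤ (⨅ i, (w i - ν i) / π i) ∧ x = ν + α • π} ∧
    {x : Fin n → ℝ | IsEquil P w c x}.Infinite := by
  have : Nonempty (Fin n) := Fin.pos_iff_nonempty.1 hn
  obtain ⟨β, hβ⟩ := exists_add_smul_mem_Ioo hπ3 hpos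
  have hfix (x : Fin n → ℝ) : Pᵀ *ᵥ x + c = x ↔ ∃ α : ℝ, x = ν + α • π :=
    transpose_mulVec_add_eq_self_iff hP hirr hπ1 hπ3 hν.symm
  have hequil : {x : Fin n → ℝ | IsEquil P w c x} =
      {x : Fin n → ℝ | ∃ α : ℝ, -(⨅ i, ν i / π i) ≤ α ∧
        α ≤ (⨅ i, (w i - ν i) / π i) ∧ x = ν + α • π} := by
    ext x
    rw [Set.mem_ofPred_eq, Set.mem_ofPred_eq,
      isEquil_iff_transpose_mulVec_add_eq_self_and_mem_Icc hP hirr hπ1 hπ3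
        ((hfix _).2 ⟨β, rfl⟩) hβ, hfix]
    constructor
    · rintro ⟨⟨α, rfl⟩, hbox⟩
      obtain ⟨hlower, hupper⟩ := (add_smul_mem_Icc_iff hπ3).1 hbox
      exact ⟨α, hlower, hupper, rfl⟩
    · rintro ⟨α, hlower, hupper, rfl⟩
      exact ⟨⟨α, rfl⟩, (add_smul_mem_Icc_iff hπ3).2 ⟨hlower, hupper⟩⟩
  refine ⟨hequil, hequil ▸ ?_⟩
  have hπ0 : π ≠ 0 := fun h => (hπ3 ⟨0, hn⟩).ne' (congrFun h _)
  refine (infinite_image_Icc_add_smul (p := ν) hπ0 (neg_lt_iff_pos_add'.2 hpos)).mono ?_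
  rintro _ ⟨α, ⟨hlower, hupper⟩, rfl⟩
  exact ⟨α, hlower, hupper, rfl⟩

/-- in the irreducible stochastic case with `∑ᵢ cᵢ = 0` and
`minᵢ (νᵢ/πᵢ) + minᵢ ((wᵢ − νᵢ)/πᵢ) > 0`, the set of equilibria is exactly the segment
`{ν + α π : −minᵢ (νᵢ/πᵢ) ≤ α ≤ minᵢ ((wᵢ − νᵢ)/πᵢ)}`, and in particular it is
infinite. -/
theorem irreducible_nonuniqueness_sufficient_segment
    {n : ℕ} (hn : 1 ≤ n) (P : Matrix (Fin n) (Fin n) ℝ)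
    (hP : ∀ i j, 0 ≤ P i j) (hst : ∀ i, ∑ j, P i j = 1)
    (hirr : ∀ i j, Reaches P i j)
    (w : Fin n → ℝ) (hw : 0 ≤ w) (c : Fin n → ℝ) (hc : ∑ i, c i = 0)
    (π : Fin n → ℝ) (hπ1 : Pᵀ.mulVec π = π) (hπ2 : ∑ i, π i = 1) (hπ3 : ∀ i, 0 < π i)
    (ν : Fin n → ℝ) (hν : ν = Pᵀ.mulVec ν + c)
    (hpos : 0 < (⨅ i, ν i / π i) + ⨅ i, (w i - ν i) / π i) :
    {x : Fin n → ℝ | IsEquil P w c x} =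
      {x : Fin n → ℝ | ∃ α : ℝ, -(⨅ i, ν i / π i) ≤ α ∧
        α ≤ (⨅ i, (w i - ν i) / π i) ∧ x = ν + α • π} ∧
    {x : Fin n → ℝ | IsEquil P w c x}.Infinite := by
  exact irreducible_nonuniqueness_sufficient_segment_general hn P hP hirr w c π hπ1 hπ3 ν hν hpos
end
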